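/- Let A be a real symmetric n × n matrix and let B₀, B be real symmetric positive definite n × n matrices such that c₁ x^T B₀ x ≤ x^T B x ≤ c₂ x^T B₀ x for all x ∈ ℝ^n, with constants 0 < c₁ ≤ c₂. Suppose every real generalized eigenvalue μ of the pencil (A, B₀) (i.e., A v = μ B₀ v for some v ≠ 0) satisfies m₀ ≤ |μ| ≤ M₀ for constants 0 < m₀ ≤ M₀. Then every real generalized eigenvalue of the pencil (A, B) satisfies m₀/c₂ ≤ |μ| ≤ M₀/c₁; consequently the condition number of B^{-1}A is at most (c₂/c₁)(M₀/m₀). -/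

import Mathlib

/-!
If `A` is Hermitian and `B = S⋆S` is positive definite, the generalized eigenvalues of `(A, B)` are
the eigenvalues of `(S⁻¹)⋆ A S⁻¹`, so bounds on them are the same as Loewner bounds:
`-M B ≤ A ≤ M B` says exactly that they all lie in `[-M, M]`. The upper bound is therefore
transitivity of the Loewner order, `A ≤ M₀ B₀ ≤ (M₀ / c₁) B`. The lower bound is the upper bound
for the pencil `(A⁻¹, B⁻¹)`, whose generalized eigenvalues are the reciprocals of those of `(A, B)`:
inversion reverses the Loewner order, so `B ≤ c₂ B₀` becomes `c₂⁻¹ B₀⁻¹ ≤ B⁻¹`.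
-/

open Matrix

section GeneralizedEigenvalue

open scoped MatrixOrder ComplexOrder

variable {ι 𝕜 : Type*} [RCLike 𝕜] {A B B₀ : Matrix ι ι 𝕜} {c M m μ : ℝ}

theorem posDef_of_smul_le (hB₀ : B₀.PosDef) (hc : 0 < c) (hle : c • B₀ ≤ B) : B.PosDef := by
  have hcB₀ : (c • B₀).PosDef := hB₀.smul hc
  simpa only [add_sub_cancel] using hcB₀.add_posSemidef (le_iff.1 hle)

variable [Fintype ι]

theorem le_iff_forall_re_dotProduct_mulVec_le (hA : A.IsHermitian) (hB : B.IsHermitian) :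
    A ≤ B ↔ ∀ x : ι → 𝕜, RCLike.re (star x ⬝ᵥ (A *ᵥ x)) ≤ RCLike.re (star x ⬝ᵥ (B *ᵥ x)) := by
  have hBA : (B - A).IsHermitian := hB.sub hA
  rw [le_iff, posSemidef_iff_dotProduct_mulVec, and_iff_right hBA]
  refine forall_congr' fun x ↦ ?_
  rw [RCLike.nonneg_iff, and_iff_left (hBA.im_star_dotProduct_mulVec_self x), sub_mulVec,
    dotProduct_sub, map_sub, sub_nonneg]

/-- `μ` is a generalized eigenvalue of the matrix pencil `(A, B)`. Only real `μ` are considered: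
for `A` Hermitian and `B` positive definite there are no others. -/
def IsGeneralizedEigenvalue (A B : Matrix ι ι 𝕜) (μ : ℝ) : Prop :=
  ∃ v : ι → 𝕜, v ≠ 0 ∧ A *ᵥ v = μ • (B *ᵥ v)

theorem isGeneralizedEigenvalue_sub_smul_iff :
    IsGeneralizedEigenvalue (A - c • B) B μ ↔ IsGeneralizedEigenvalue A B (μ + c) := by
  simp only [IsGeneralizedEigenvalue, sub_mulVec, smul_mulVec, sub_eq_iff_eq_add, add_smul]

theorem isGeneralizedEigenvalue_smul_sub_iff :
    IsGeneralizedEigenvalue (c • B - A) B μ ↔ IsGeneralizedEigenvalue A B (c - μ) := by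
  simp only [IsGeneralizedEigenvalue, sub_mulVec, smul_mulVec, sub_smul]
  exact exists_congr fun v ↦ and_congr_right' (sub_eq_iff_comm.trans eq_comm)

theorem isUnit_iff_not_isGeneralizedEigenvalue_zero [DecidableEq ι] :
    IsUnit A ↔ ¬ IsGeneralizedEigenvalue A B 0 := by
  simp only [IsGeneralizedEigenvalue, zero_smul, exists_mulVec_eq_zero_iff,
    isUnit_iff_isUnit_det, isUnit_iff_ne_zero]

namespace IsGeneralizedEigenvalue

theorem ne_zero [DecidableEq ι] (h : IsGeneralizedEigenvalue A B μ) (hA : IsUnit A) : μ ≠ 0 := by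
  rintro rfl
  exact isUnit_iff_not_isGeneralizedEigenvalue_zero.1 hA h

theorem star_mul_mul [DecidableEq ι] (h : IsGeneralizedEigenvalue A B μ) {S : Matrix ι ι 𝕜}
    (hS : IsUnit S) : IsGeneralizedEigenvalue (star S * A * S) (star S * B * S) μ := by
  obtain ⟨v, hv, hAv⟩ := h
  obtain ⟨w, rfl⟩ := mulVec_surjective_iff_isUnit.2 hS v
  refine ⟨w, ?_, ?_⟩
  · rintro rfl
    exact hv (mulVec_zero S)
  · simp only [← mulVec_mulVec, hAv, mulVec_smul]

theorem inv [DecidableEq ι] (h : IsGeneralizedEigenvalue A B μ) (hA : IsUnit A) (hB : IsUnit B) :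
    IsGeneralizedEigenvalue A⁻¹ B⁻¹ μ⁻¹ := by
  have hμ := h.ne_zero hA
  obtain ⟨v, hv, hAv⟩ := h
  rw [isUnit_iff_isUnit_det] at hB
  have hBA : B⁻¹ *ᵥ (A *ᵥ v) = μ • v := by
    rw [hAv, mulVec_smul, mulVec_mulVec, nonsing_inv_mul B hB, one_mulVec]
  refine ⟨A *ᵥ v, ?_, ?_⟩
  · rwa [Ne, ← mulVec_zero A, (mulVec_injective_iff_isUnit.2 hA).eq_iff]
  · rw [hBA, inv_smul_smul₀ hμ, mulVec_mulVec,
      nonsing_inv_mul A ((isUnit_iff_isUnit_det A).1 hA), one_mulVec]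

theorem nonneg (h : IsGeneralizedEigenvalue A B μ) (hA : A.PosSemidef) (hB : B.PosDef) :
    0 ≤ μ := by
  obtain ⟨v, hv, hAv⟩ := h
  have hAv_nonneg := hA.re_dotProduct_nonneg v
  rw [hAv, dotProduct_smul, RCLike.smul_re] at hAv_nonneg
  exact nonneg_of_mul_nonneg_left hAv_nonneg (hB.re_dotProduct_pos hv)

theorem pos (h : IsGeneralizedEigenvalue A B μ) (hA : A.PosDef) (hB : B.PosDef) : 0 < μ := by
  classical
  exact (h.nonneg hA.posSemidef hB).lt_of_ne' (h.ne_zero hA.isUnit)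

end IsGeneralizedEigenvalue

theorem isGeneralizedEigenvalue_inv_inv_iff [DecidableEq ι] (hA : IsUnit A) (hB : IsUnit B) :
    IsGeneralizedEigenvalue A⁻¹ B⁻¹ μ ↔ IsGeneralizedEigenvalue A B μ⁻¹ := by
  refine ⟨fun h ↦ ?_, fun h ↦ inv_inv μ ▸ h.inv hA hB⟩
  simpa only [nonsing_inv_nonsing_inv _ ((isUnit_iff_isUnit_det _).1 hA),
    nonsing_inv_nonsing_inv _ ((isUnit_iff_isUnit_det _).1 hB)] using
    h.inv (isUnit_nonsing_inv_iff.2 hA) (isUnit_nonsing_inv_iff.2 hB)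

theorem isGeneralizedEigenvalue_one_eigenvalues [DecidableEq ι]
    (hA : A.IsHermitian) (i : ι) : IsGeneralizedEigenvalue A 1 (hA.eigenvalues i) := by
  refine ⟨hA.eigenvectorBasis i, ?_, ?_⟩
  · simpa using hA.eigenvectorBasis.toBasis.ne_zero i
  · rw [one_mulVec, hA.mulVec_eigenvectorBasis]

theorem posSemidef_iff_forall_isGeneralizedEigenvalue_nonneg
    (hA : A.IsHermitian) (hB : B.PosDef) :
    A.PosSemidef ↔ ∀ μ, IsGeneralizedEigenvalue A B μ → 0 ≤ μ := by
  classical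
  refine ⟨fun hA_psd μ hμ ↦ hμ.nonneg hA_psd hB, fun h ↦ ?_⟩
  obtain ⟨S, hS, rfl⟩ :=
    CStarAlgebra.isStrictlyPositive_iff_eq_star_mul_self.1 hB.isStrictlyPositive
  have hC : (star S⁻¹ * A * S⁻¹).IsHermitian := isHermitian_conjTranspose_mul_mul S⁻¹ hA
  have hS_inv : S⁻¹ * S = 1 := nonsing_inv_mul S ((isUnit_iff_isUnit_det S).1 hS)
  have hS_star_inv : star S * star S⁻¹ = 1 := by rw [← star_mul, hS_inv, star_one]
  have hA_eq : star S * (star S⁻¹ * A * S⁻¹) * S = A := by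
    simp only [mul_assoc, hS_inv, mul_one]
    rw [← mul_assoc, hS_star_inv, one_mul]
  rw [← hA_eq, hS.posSemidef_star_left_conjugate_iff, hC.posSemidef_iff_eigenvalues_nonneg]
  intro i
  have heigenvalue := (isGeneralizedEigenvalue_one_eigenvalues hC i).star_mul_mul hS
  rw [hA_eq, mul_one] at heigenvalue
  exact h _ heigenvalue

theorem smul_le_iff_forall_isGeneralizedEigenvalue (hA : A.IsHermitian) (hB : B.PosDef) :
    c • B ≤ A ↔ ∀ μ, IsGeneralizedEigenvalue A B μ → c ≤ μ := by
  rw [le_iff, posSemidef_iff_forall_isGeneralizedEigenvalue_nonneg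
    (hA.sub (hB.isHermitian.smul (.all c))) hB]
  simp only [isGeneralizedEigenvalue_sub_smul_iff]
  exact (Equiv.addRight c).forall_congr (by simp)

theorem le_smul_iff_forall_isGeneralizedEigenvalue (hA : A.IsHermitian) (hB : B.PosDef) :
    A ≤ c • B ↔ ∀ μ, IsGeneralizedEigenvalue A B μ → μ ≤ c := by
  rw [le_iff, posSemidef_iff_forall_isGeneralizedEigenvalue_nonneg
    ((hB.isHermitian.smul (.all c)).sub hA) hB]
  simp only [isGeneralizedEigenvalue_smul_sub_iff]
  exact (Equiv.subLeft c).forall_congr (by simp)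

theorem inv_smul_inv_le_inv [DecidableEq ι] (hA : A.PosDef) (hB : B.PosDef) (hAB : A ≤ c • B) :
    c⁻¹ • B⁻¹ ≤ A⁻¹ := by
  rw [le_smul_iff_forall_isGeneralizedEigenvalue hA.isHermitian hB] at hAB
  rw [smul_le_iff_forall_isGeneralizedEigenvalue hA.inv.isHermitian hB.inv]
  intro μ hμ
  have hμ_pos : 0 < μ := hμ.pos hA.inv hB.inv
  rw [isGeneralizedEigenvalue_inv_inv_iff hA.isUnit hB.isUnit] at hμ
  exact inv_le_of_inv_le₀ hμ_pos (hAB _ hμ)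

theorem forall_abs_isGeneralizedEigenvalue_le_iff (hA : A.IsHermitian) (hB : B.PosDef) :
    (∀ μ, IsGeneralizedEigenvalue A B μ → |μ| ≤ M) ↔ -M • B ≤ A ∧ A ≤ M • B := by
  simp only [smul_le_iff_forall_isGeneralizedEigenvalue hA hB,
    le_smul_iff_forall_isGeneralizedEigenvalue hA hB, abs_le, imp_and, forall_and]

namespace IsGeneralizedEigenvalue

theorem abs_le_div_of_smul_le (hμ : IsGeneralizedEigenvalue A B μ) (hA : A.IsHermitian)
    (hB₀ : B₀.PosDef) (hc : 0 < c) (hle : c • B₀ ≤ B) (hM : 0 ≤ M)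
    (hAB₀ : ∀ ν, IsGeneralizedEigenvalue A B₀ ν → |ν| ≤ M) : |μ| ≤ M / c := by
  have hB : B.PosDef := posDef_of_smul_le hB₀ hc hle
  obtain ⟨hlow, hupp⟩ := (forall_abs_isGeneralizedEigenvalue_le_iff hA hB₀).1 hAB₀
  have hMB₀ : M • B₀ ≤ (M / c) • B := by
    simpa [smul_smul, hc.ne'] using smul_le_smul_of_nonneg_left hle (div_nonneg hM hc.le)
  have hlow' : -(M / c) • B ≤ A :=
    calc -(M / c) • B = -((M / c) • B) := neg_smul _ _
      _ ≤ -(M • B₀) := neg_le_neg hMB₀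
      _ = -M • B₀ := (neg_smul _ _).symm
      _ ≤ A := hlow
  exact (forall_abs_isGeneralizedEigenvalue_le_iff hA hB).2 ⟨hlow', hupp.trans hMB₀⟩ μ hμ

theorem div_le_abs_of_le_smul (hμ : IsGeneralizedEigenvalue A B μ) (hA : A.IsHermitian)
    (hB₀ : B₀.PosDef) (hB : B.PosDef) (hc : 0 < c) (hle : B ≤ c • B₀) (hm : 0 < m)
    (hAB₀ : ∀ ν, IsGeneralizedEigenvalue A B₀ ν → m ≤ |ν|) : m / c ≤ |μ| := by
  classical
  have hA_unit : IsUnit A := isUnit_iff_not_isGeneralizedEigenvalue_zero.2 fun h ↦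
    hm.not_ge (abs_zero (α := ℝ) ▸ hAB₀ 0 h)
  have hinv (ν : ℝ) (hν : IsGeneralizedEigenvalue A⁻¹ B₀⁻¹ ν) : |ν| ≤ m⁻¹ := by
    have hm_le := hAB₀ _ ((isGeneralizedEigenvalue_inv_inv_iff hA_unit hB₀.isUnit).1 hν)
    rw [abs_inv] at hm_le
    exact le_inv_of_le_inv₀ hm hm_le
  have hμ_inv : |μ⁻¹| ≤ m⁻¹ / c⁻¹ :=
    (hμ.inv hA_unit hB.isUnit).abs_le_div_of_smul_le hA.inv hB₀.inv (inv_pos.2 hc)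
      (inv_smul_inv_le_inv hB hB₀ hle) (inv_pos.2 hm).le hinv
  rw [abs_inv, inv_div_inv, ← inv_div] at hμ_inv
  exact (inv_le_inv₀ (abs_pos.2 (hμ.ne_zero hA_unit)) (div_pos hm hc)).1 hμ_inv

end IsGeneralizedEigenvalue

theorem stmt13_general {c₁ c₂ m₀ M₀ : ℝ} (hA : A.IsHermitian) (hB₀ : B₀.PosDef)
    (hB : B.IsHermitian) (hc₁ : 0 < c₁) (hc₁₂ : c₁ ≤ c₂)
    (hlow : ∀ x : ι → 𝕜,
      c₁ * RCLike.re (star x ⬝ᵥ (B₀ *ᵥ x)) ≤ RCLike.re (star x ⬝ᵥ (B *ᵥ x)))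
    (hupp : ∀ x : ι → 𝕜,
      RCLike.re (star x ⬝ᵥ (B *ᵥ x)) ≤ c₂ * RCLike.re (star x ⬝ᵥ (B₀ *ᵥ x)))
    (hm₀ : 0 < m₀) (hm₀M₀ : m₀ ≤ M₀)
    (heig : ∀ μ, IsGeneralizedEigenvalue A B₀ μ → m₀ ≤ |μ| ∧ |μ| ≤ M₀) :
    (∀ μ, IsGeneralizedEigenvalue A B μ → m₀ / c₂ ≤ |μ| ∧ |μ| ≤ M₀ / c₁) ∧
    ∀ μ₁ μ₂, IsGeneralizedEigenvalue A B μ₁ → IsGeneralizedEigenvalue A B μ₂ →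
      |μ₁| ≤ (c₂ / c₁) * (M₀ / m₀) * |μ₂| := by
  have hc₂ : 0 < c₂ := hc₁.trans_le hc₁₂
  have hM₀ : 0 < M₀ := hm₀.trans_le hm₀M₀
  have hcB₀ (c : ℝ) : (c • B₀).IsHermitian := hB₀.isHermitian.smul (.all c)
  have hB₀_le : c₁ • B₀ ≤ B := (le_iff_forall_re_dotProduct_mulVec_le (hcB₀ c₁) hB).2 <| by
    simpa only [smul_mulVec, dotProduct_smul, RCLike.smul_re] using hlow
  have hle_B₀ : B ≤ c₂ • B₀ := (le_iff_forall_re_dotProduct_mulVec_le hB (hcB₀ c₂)).2 <| by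
    simpa only [smul_mulVec, dotProduct_smul, RCLike.smul_re] using hupp
  have hB_pos : B.PosDef := posDef_of_smul_le hB₀ hc₁ hB₀_le
  have hlower (μ : ℝ) (hμ : IsGeneralizedEigenvalue A B μ) : m₀ / c₂ ≤ |μ| :=
    hμ.div_le_abs_of_le_smul hA hB₀ hB_pos hc₂ hle_B₀ hm₀ fun ν hν ↦ (heig ν hν).1
  have hupper (μ : ℝ) (hμ : IsGeneralizedEigenvalue A B μ) : |μ| ≤ M₀ / c₁ :=
    hμ.abs_le_div_of_smul_le hA hB₀ hc₁ hB₀_le hM₀.le fun ν hν ↦ (heig ν hν).2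
  refine ⟨fun μ hμ ↦ ⟨hlower μ hμ, hupper μ hμ⟩, fun μ₁ μ₂ hμ₁ hμ₂ ↦ ?_⟩
  calc |μ₁| ≤ M₀ / c₁ := hupper μ₁ hμ₁
    _ = (c₂ / c₁) * (M₀ / m₀) * (m₀ / c₂) := by field_simp
    _ ≤ (c₂ / c₁) * (M₀ / m₀) * |μ₂| := by gcongr; exact hlower μ₂ hμ₂

end GeneralizedEigenvalue

theorem stmt13 {n : ℕ}
    (A B₀ B : Matrix (Fin n) (Fin n) ℝ)
    (hA : A.IsSymm) (hB₀ : B₀.PosDef) (hB : B.PosDef)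
    (c₁ c₂ : ℝ) (hc₁ : 0 < c₁) (hc₁₂ : c₁ ≤ c₂)
    (hlow : ∀ x : Fin n → ℝ, c₁ * (x ⬝ᵥ (B₀ *ᵥ x)) ≤ x ⬝ᵥ (B *ᵥ x))
    (hupp : ∀ x : Fin n → ℝ, x ⬝ᵥ (B *ᵥ x) ≤ c₂ * (x ⬝ᵥ (B₀ *ᵥ x)))
    (m₀ M₀ : ℝ) (hm₀ : 0 < m₀) (hm₀M₀ : m₀ ≤ M₀)
    (heig : ∀ μ : ℝ, (∃ v : Fin n → ℝ, v ≠ 0 ∧ A *ᵥ v = μ • (B₀ *ᵥ v)) →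
      m₀ ≤ |μ| ∧ |μ| ≤ M₀) :
    (∀ μ : ℝ, (∃ v : Fin n → ℝ, v ≠ 0 ∧ A *ᵥ v = μ • (B *ᵥ v)) →
      m₀ / c₂ ≤ |μ| ∧ |μ| ≤ M₀ / c₁) ∧
    (∀ μ₁ μ₂ : ℝ,
      (∃ v : Fin n → ℝ, v ≠ 0 ∧ A *ᵥ v = μ₁ • (B *ᵥ v)) →
      (∃ v : Fin n → ℝ, v ≠ 0 ∧ A *ᵥ v = μ₂ • (B *ᵥ v)) →
      |μ₁| ≤ (c₂ / c₁) * (M₀ / m₀) * |μ₂|) :=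
  stmt13_general ((conjTranspose_eq_transpose_of_trivial A).trans hA) hB₀ hB.isHermitian hc₁ hc₁₂
    hlow hupp hm₀ hm₀M₀ heig
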